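/- arXiv:2010.08508 — 2 statements merged into one kernel-verified Lean document; each statement's English description precedes it below -/
import Mathlib

section
/- (Lemma A.1) Let A and B be {0,1}-valued random variables on a common probability space with E[A] > 0 and E[B] > 0. Then |E[A | B = 1] − E[A]| ≤ sqrt(I(A;B)/2) / E[B]. -/
/-!
`Pr[B = b] * (E[f(A) | B = b] - E[f(A)])` is the covariance of `f(A)` and the indicator of
`{B = b}`. A covariance of functions of `A` and `B` is an integral against the signed measure
`P_{AB} - P_A ⊗ P_B`, and shifting both functions does not change it; once each is centred at the
midpoint of its range, it is at most `1 / 4` of the product of the ranges times the total mass of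
`|P_{AB} - P_A ⊗ P_B|`. As `I(A;B)` is the relative entropy of `P_{AB}` with respect to
`P_A ⊗ P_B`, that mass is at most `√(2 I(A;B))` by Pinsker's inequality, which follows by the
Cauchy-Schwarz inequality from the pointwise bound
`3 (t - 1)² ≤ 2 (t + 2) (t log t + 1 - t)`.
-/

open MeasureTheory

/-- Shannon entropy (in nats) of a random variable `A` on the probability space `(Ω, μ)`,
defined via the probabilities of its (finitely many nonzero) level sets. -/
noncomputable def entropy {Ω α : Type*} [MeasurableSpace Ω] (μ : Measure Ω) (A : Ω → α) : ℝ :=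
  -∑' a : α, (μ (A ⁻¹' {a})).toReal * Real.log (μ (A ⁻¹' {a})).toReal

/-- Mutual information (in nats): `I(A;B) = H(A) + H(B) - H(A,B)`. -/
noncomputable def mutualInfo {Ω α β : Type*} [MeasurableSpace Ω] (μ : Measure Ω)
    (A : Ω → α) (B : Ω → β) : ℝ :=
  entropy μ A + entropy μ B - entropy μ (fun ω => (A ω, B ω))

open ProbabilityTheory InformationTheory Finset

section Pinsker

lemma two_mul_sub_one_le_add_one_mul_log {t : ℝ} (ht : 1 ≤ t) :
    2 * (t - 1) ≤ (t + 1) * Real.log t := by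
  have h := Real.le_log_one_add_of_nonneg (sub_nonneg.2 ht)
  rw [add_sub_cancel, div_le_iff₀ (by linarith)] at h
  linarith

lemma add_one_mul_log_le_two_mul_sub_one {t : ℝ} (ht₀ : 0 < t) (ht₁ : t ≤ 1) :
    (t + 1) * Real.log t ≤ 2 * (t - 1) := by
  have h := mul_le_mul_of_nonneg_left
    (two_mul_sub_one_le_add_one_mul_log ((one_le_inv₀ ht₀).2 ht₁)) ht₀.le
  rw [Real.log_inv] at h
  field_simp at h
  linarith

lemma three_mul_sub_one_sq_le_mul_klFun {t : ℝ} (ht : 0 ≤ t) :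
    3 * (t - 1) ^ 2 ≤ 2 * (t + 2) * klFun t := by
  let F : ℝ → ℝ := fun t => 2 * (t + 2) * klFun t - 3 * (t - 1) ^ 2
  have hF {t : ℝ} (ht : 0 < t) : HasDerivAt F (4 * ((t + 1) * Real.log t - 2 * (t - 1))) t := by
    have hlin : HasDerivAt (fun t : ℝ => 2 * (t + 2)) 2 t := by
      simpa using ((hasDerivAt_id t).add_const 2).const_mul 2
    have hquad : HasDerivAt (fun t : ℝ => 3 * (t - 1) ^ 2) (6 * (t - 1)) t :=
      ((((hasDerivAt_id t).sub_const 1).pow 2).const_mul 3).congr_deriv (by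
        rw [id, Nat.cast_two, pow_one]
        ring)
    refine ((hlin.mul (hasDerivAt_klFun ht.ne')).sub hquad).congr_deriv ?_
    rw [klFun_apply]
    ring
  have hcont : Continuous F := by
    have := continuous_klFun
    fun_prop
  have hmin : IsMinOn F (Set.Ici 0) 1 := by
    refine isMinOn_Ici_of_deriv hcont.continuousAt hcont.continuousAt
      (fun u hu => (hF hu.1).differentiableAt.differentiableWithinAt)
      (fun u hu => (hF (one_pos.trans hu)).differentiableAt.differentiableWithinAt)
      (fun u hu => ?_) (fun u hu => ?_)
    · rw [(hF hu.1).deriv]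
      linarith [add_one_mul_log_le_two_mul_sub_one hu.1 hu.2.le]
    · rw [(hF (one_pos.trans hu)).deriv]
      linarith [two_mul_sub_one_le_add_one_mul_log (le_of_lt hu)]
  have h : F 1 ≤ F t := hmin ht
  simp only [F, klFun_one, sub_self] at h
  linarith

lemma three_mul_sub_sq_le_mul_klFun_div {x y : ℝ} (hx : 0 ≤ x) (hy : 0 ≤ y)
    (hxy : y = 0 → x = 0) :
    3 * (x - y) ^ 2 ≤ 2 * (x + 2 * y) * (y * klFun (x / y)) := by
  rcases hy.eq_or_lt with rfl | hy
  · simp [hxy rfl]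
  calc 3 * (x - y) ^ 2
      = y ^ 2 * (3 * (x / y - 1) ^ 2) := by field_simp
    _ ≤ y ^ 2 * (2 * (x / y + 2) * klFun (x / y)) :=
        mul_le_mul_of_nonneg_left (three_mul_sub_one_sq_le_mul_klFun (div_nonneg hx hy.le))
          (sq_nonneg y)
    _ = 2 * (x + 2 * y) * (y * klFun (x / y)) := by field_simp

variable {ι : Type*} {s : Finset ι} {p q : ι → ℝ}

/-- Relative entropy (Kullback-Leibler divergence, in nats) of the weights `p` with respect to the
weights `q` on the finite set `s`. The junk values `x / 0 = 0` and `log 0 = 0` implement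
`0 * log (0 / y) = 0`, but a term `x * log (x / 0)` with `x ≠ 0`, conventionally infinite, counts
as `0`. -/
noncomputable def relEntropy (s : Finset ι) (p q : ι → ℝ) : ℝ :=
  ∑ i ∈ s, p i * Real.log (p i / q i)

lemma relEntropy_eq_sum_mul_klFun (hpq : ∀ i ∈ s, q i = 0 → p i = 0)
    (hsum : ∑ i ∈ s, p i = ∑ i ∈ s, q i) :
    relEntropy s p q = ∑ i ∈ s, q i * klFun (p i / q i) := by
  have hterm (i) (hi : i ∈ s) :
      q i * klFun (p i / q i) = p i * Real.log (p i / q i) + q i - p i := by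
    have hmul : p i / q i * q i = p i := div_mul_cancel_of_imp (hpq i hi)
    rw [klFun_apply]
    linear_combination (Real.log (p i / q i) - 1) * hmul
  rw [sum_congr rfl hterm, sum_sub_distrib, sum_add_distrib, hsum, add_sub_cancel_right,
    relEntropy]

/-- **Pinsker's inequality** -/
theorem sq_sum_abs_sub_le_mul_relEntropy (hp : ∀ i ∈ s, 0 ≤ p i) (hq : ∀ i ∈ s, 0 ≤ q i)
    (hpq : ∀ i ∈ s, q i = 0 → p i = 0) (hsum : ∑ i ∈ s, p i = ∑ i ∈ s, q i) :
    (∑ i ∈ s, |p i - q i|) ^ 2 ≤ 2 * (∑ i ∈ s, p i) * relEntropy s p q := by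
  have hweight : ∑ i ∈ s, 2 / 3 * (p i + 2 * q i) = 2 * ∑ i ∈ s, p i := by
    rw [← mul_sum, sum_add_distrib, ← mul_sum, ← hsum]
    ring
  rw [relEntropy_eq_sum_mul_klFun hpq hsum, ← hweight]
  refine sum_sq_le_sum_mul_sum_of_sq_le_mul s (fun i hi => ?_) (fun i hi => ?_) (fun i hi => ?_)
  · have := hp i hi
    have := hq i hi
    positivity
  · exact mul_nonneg (hq i hi) (klFun_nonneg (div_nonneg (hp i hi) (hq i hi)))
  · rw [sq_abs]
    linarith [three_mul_sub_sq_le_mul_klFun_div (hp i hi) (hq i hi) (hpq i hi)]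

end Pinsker

section FiniteRange

variable {Ω γ E : Type*} [MeasurableSpace Ω] {μ : Measure Ω} {X : Ω → γ} {s : Finset γ}

/-- The probability mass function `c ↦ Pr[X = c]` of a random variable `X`, real-valued so that
it can be used as the weights of a relative entropy. -/
noncomputable def massFun (μ : Measure Ω) (X : Ω → γ) (c : γ) : ℝ := μ.real (X ⁻¹' {c})

lemma massFun_nonneg (c : γ) : 0 ≤ massFun μ X c := measureReal_nonneg

lemma massFun_prodMk_le_left [IsFiniteMeasure μ] {δ : Type*} (Y : Ω → δ) (c : γ × δ) :
    massFun μ (fun ω => (X ω, Y ω)) c ≤ massFun μ X c.1 :=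
  measureReal_mono fun _ hω => congrArg Prod.fst hω

lemma massFun_prodMk_le_right [IsFiniteMeasure μ] {δ : Type*} (Y : Ω → δ) (c : γ × δ) :
    massFun μ (fun ω => (X ω, Y ω)) c ≤ massFun μ Y c.2 :=
  measureReal_mono fun _ hω => congrArg Prod.snd hω

lemma entropy_eq_neg_sum (hX : ∀ ω, X ω ∈ s) :
    entropy μ X = -∑ c ∈ s, massFun μ X c * Real.log (massFun μ X c) := by
  refine congrArg Neg.neg (tsum_eq_sum fun c hc => ?_)
  have hempty : X ⁻¹' {c} = ∅ := Set.preimage_singleton_eq_empty.2 fun ⟨ω, hω⟩ => hc (hω ▸ hX ω)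
  simp [hempty]

variable [MeasurableSpace γ] [MeasurableSingletonClass γ] [NormedAddCommGroup E]

lemma memLp_comp_of_forall_mem [IsFiniteMeasure μ] (hXm : AEMeasurable X μ) (hX : ∀ ω, X ω ∈ s)
    (g : γ → E) (r : ENNReal) : MemLp (fun ω => g (X ω)) r μ := by
  have hmeas : AEStronglyMeasurable (fun ω => g (X ω)) μ :=
    (StronglyMeasurable.of_discrete (f := fun c : s => g c)).aestronglyMeasurable.comp_aemeasurable
      (hXm.subtype_mk (hfs := hX))
  exact .of_bound hmeas (∑ c ∈ s, ‖g c‖) <| ae_of_all _ fun ω =>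
    single_le_sum (f := fun c => ‖g c‖) (fun _ _ => norm_nonneg _) (hX ω)

lemma integral_comp_eq_sum_massFun [IsFiniteMeasure μ] [NormedSpace ℝ E] [CompleteSpace E]
    (hXm : AEMeasurable X μ) (hX : ∀ ω, X ω ∈ s) (g : γ → E) :
    ∫ ω, g (X ω) ∂μ = ∑ c ∈ s, massFun μ X c • g c := by
  let X' : Ω → s := fun ω => ⟨X ω, hX ω⟩
  have hX'm : AEMeasurable X' μ := hXm.subtype_mk
  have hmass (c : s) : (μ.map X').real {c} = massFun μ X c := by
    rw [map_measureReal_apply_of_aemeasurable hX'm (measurableSet_singleton c), massFun]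
    congr 1
    ext ω
    exact Subtype.ext_iff
  calc ∫ ω, g (X ω) ∂μ = ∫ c : s, g c ∂μ.map X' :=
        (integral_map (φ := X') (f := fun c : s => g c) hX'm
          StronglyMeasurable.of_discrete.aestronglyMeasurable).symm
    _ = ∑ c : s, massFun μ X c • g c := by
        rw [integral_fintype .of_finite]
        simp only [hmass]
    _ = ∑ c ∈ s, massFun μ X c • g c := s.sum_coe_sort fun c => massFun μ X c • g c

lemma entropy_eq_neg_integral_log [IsFiniteMeasure μ] (hXm : AEMeasurable X μ)
    (hX : ∀ ω, X ω ∈ s) : entropy μ X = -∫ ω, Real.log (massFun μ X (X ω)) ∂μ := by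
  rw [entropy_eq_neg_sum hX, integral_comp_eq_sum_massFun hXm hX fun c => Real.log (massFun μ X c)]
  rfl

lemma integral_eq_measureReal_of_zero_or_one [IsFiniteMeasure μ] {Y : Ω → ℝ}
    (hYm : AEMeasurable Y μ) (hY : ∀ ω, Y ω = 0 ∨ Y ω = 1) :
    ∫ ω, Y ω ∂μ = μ.real (Y ⁻¹' {1}) := by
  have h := integral_comp_eq_sum_massFun (s := {0, 1}) hYm (by simpa using hY) id
  simpa [massFun] using h

lemma sum_massFun [IsProbabilityMeasure μ] (hXm : AEMeasurable X μ) (hX : ∀ ω, X ω ∈ s) :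
    ∑ c ∈ s, massFun μ X c = 1 := by
  simpa using (integral_comp_eq_sum_massFun hXm hX (fun _ => (1 : ℝ))).symm

end FiniteRange

lemma integral_cond_sub_integral_eq_covariance_div {Ω : Type*} [MeasurableSpace Ω]
    {μ : Measure Ω} [IsProbabilityMeasure μ] {S : Set Ω} {X : Ω → ℝ}
    (hS : NullMeasurableSet S μ) (hμS : μ S ≠ 0) (hX : MemLp X 2 μ) :
    ∫ ω, X ω ∂μ[|S] - ∫ ω, X ω ∂μ = cov[X, S.indicator 1; μ] / μ.real S := by
  have hμS' : μ.real S ≠ 0 := (measureReal_ne_zero_iff (measure_ne_top μ S)).2 hμS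
  have hind : MemLp (S.indicator (1 : Ω → ℝ)) 2 μ :=
    .of_bound (aestronglyMeasurable_one.indicator₀ hS) 1 <| ae_of_all _ fun ω =>
      (norm_indicator_le_norm_self _ ω).trans norm_one.le
  have hmul : ∫ ω, (X * S.indicator (1 : Ω → ℝ)) ω ∂μ = ∫ ω in S, X ω ∂μ := by
    rw [← integral_indicator₀ hS]
    simp only [Pi.mul_apply, ← Set.indicator_mul_right, Pi.one_apply, mul_one]
  have hone : ∫ ω, S.indicator (1 : Ω → ℝ) ω ∂μ = μ.real S := by
    rw [integral_indicator₀ hS]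
    simp
  rw [covariance_eq_sub hX hind, hmul, hone, ProbabilityTheory.cond, integral_smul_measure,
    ENNReal.toReal_inv, ← measureReal_def, smul_eq_mul]
  field_simp

section MutualInfo

variable {Ω α β : Type*} [MeasurableSpace Ω] {μ : Measure Ω}
  [MeasurableSpace α] [MeasurableSingletonClass α]
  [MeasurableSpace β] [MeasurableSingletonClass β]
  {A : Ω → α} {B : Ω → β} {s : Finset α} {t : Finset β}

lemma mutualInfo_eq_relEntropy [IsFiniteMeasure μ] (hAm : AEMeasurable A μ)
    (hBm : AEMeasurable B μ) (hA : ∀ ω, A ω ∈ s) (hB : ∀ ω, B ω ∈ t) :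
    mutualInfo μ A B = relEntropy (s ×ˢ t) (massFun μ fun ω => (A ω, B ω))
      fun c => massFun μ A c.1 * massFun μ B c.2 := by
  have hAB (ω) : (A ω, B ω) ∈ s ×ˢ t := mem_product.2 ⟨hA ω, hB ω⟩
  have hsum (g : α × β → ℝ) := integral_comp_eq_sum_massFun (hAm.prodMk hBm) hAB g
  have hA_entropy : entropy μ A =
      -∑ c ∈ s ×ˢ t, massFun μ (fun ω => (A ω, B ω)) c * Real.log (massFun μ A c.1) :=
    (entropy_eq_neg_integral_log hAm hA).trans <| congrArg Neg.neg <|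
      hsum fun c => Real.log (massFun μ A c.1)
  have hB_entropy : entropy μ B =
      -∑ c ∈ s ×ˢ t, massFun μ (fun ω => (A ω, B ω)) c * Real.log (massFun μ B c.2) :=
    (entropy_eq_neg_integral_log hBm hB).trans <| congrArg Neg.neg <|
      hsum fun c => Real.log (massFun μ B c.2)
  rw [mutualInfo, hA_entropy, hB_entropy, entropy_eq_neg_sum hAB, sub_neg_eq_add, ← neg_add,
    neg_add_eq_sub, ← sum_add_distrib, ← sum_sub_distrib, relEntropy]
  refine sum_congr rfl fun c _ => ?_
  rcases (massFun_nonneg (μ := μ) (X := fun ω => (A ω, B ω)) c).eq_or_lt with hc | hc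
  · simp [← hc]
  have hcA := hc.trans_le (massFun_prodMk_le_left B c)
  have hcB := hc.trans_le (massFun_prodMk_le_right B c)
  rw [Real.log_div hc.ne' (mul_pos hcA hcB).ne', Real.log_mul hcA.ne' hcB.ne']
  ring

variable [IsProbabilityMeasure μ]

lemma sum_abs_massFun_sub_mul_le_sqrt_mutualInfo (hAm : AEMeasurable A μ) (hBm : AEMeasurable B μ)
    (hA : ∀ ω, A ω ∈ s) (hB : ∀ ω, B ω ∈ t) :
    ∑ c ∈ s ×ˢ t, |massFun μ (fun ω => (A ω, B ω)) c - massFun μ A c.1 * massFun μ B c.2| ≤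
      √(2 * mutualInfo μ A B) := by
  have hjoint : ∑ c ∈ s ×ˢ t, massFun μ (fun ω => (A ω, B ω)) c = 1 :=
    sum_massFun (hAm.prodMk hBm) fun ω => mem_product.2 ⟨hA ω, hB ω⟩
  have hprod : ∑ c ∈ s ×ˢ t, massFun μ A c.1 * massFun μ B c.2 = 1 := by
    rw [sum_product, ← sum_mul_sum, sum_massFun hAm hA, sum_massFun hBm hB, mul_one]
  have habs (c : α × β) (h : massFun μ A c.1 * massFun μ B c.2 = 0) :
      massFun μ (fun ω => (A ω, B ω)) c = 0 := by
    refine le_antisymm ?_ (massFun_nonneg c)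
    rcases mul_eq_zero.1 h with h | h
    · exact h ▸ massFun_prodMk_le_left B c
    · exact h ▸ massFun_prodMk_le_right B c
  have hpinsker := sq_sum_abs_sub_le_mul_relEntropy (s := s ×ˢ t) (fun c _ => massFun_nonneg c)
    (fun c _ => mul_nonneg (massFun_nonneg c.1) (massFun_nonneg c.2)) (fun c _ => habs c)
    (hjoint.trans hprod.symm)
  rw [hjoint, mul_one, ← mutualInfo_eq_relEntropy hAm hBm hA hB] at hpinsker
  exact Real.le_sqrt_of_sq_le hpinsker

lemma covariance_comp_eq_sum (hAm : AEMeasurable A μ) (hBm : AEMeasurable B μ)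
    (hA : ∀ ω, A ω ∈ s) (hB : ∀ ω, B ω ∈ t) (f : α → ℝ) (g : β → ℝ) :
    cov[fun ω => f (A ω), fun ω => g (B ω); μ] =
      ∑ c ∈ s ×ˢ t,
        (massFun μ (fun ω => (A ω, B ω)) c - massFun μ A c.1 * massFun μ B c.2) *
          (f c.1 * g c.2) := by
  have hjoint := integral_comp_eq_sum_massFun (hAm.prodMk hBm)
    (fun ω => mem_product.2 ⟨hA ω, hB ω⟩) fun c => f c.1 * g c.2
  rw [covariance_eq_sub (memLp_comp_of_forall_mem hAm hA f 2) (memLp_comp_of_forall_mem hBm hB g 2),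
    integral_comp_eq_sum_massFun hAm hA f, integral_comp_eq_sum_massFun hBm hB g, sum_mul_sum,
    ← sum_product']
  refine (congrArg (· - _) hjoint).trans ?_
  rw [← sum_sub_distrib]
  refine sum_congr rfl fun c _ => ?_
  simp only [smul_eq_mul]
  ring

lemma abs_covariance_comp_le_mul_sum_abs (hAm : AEMeasurable A μ) (hBm : AEMeasurable B μ)
    (hA : ∀ ω, A ω ∈ s) (hB : ∀ ω, B ω ∈ t) {f : α → ℝ} {g : β → ℝ} {m M n N : ℝ}
    (hf : ∀ a ∈ s, f a ∈ Set.Icc m M) (hg : ∀ b ∈ t, g b ∈ Set.Icc n N) :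
    |cov[fun ω => f (A ω), fun ω => g (B ω); μ]| ≤
      (M - m) * (N - n) / 4 * ∑ c ∈ s ×ˢ t,
        |massFun μ (fun ω => (A ω, B ω)) c - massFun μ A c.1 * massFun μ B c.2| := by
  have hf_mid (a) (ha : a ∈ s) : |f a - (m + M) / 2| ≤ (M - m) / 2 :=
    abs_le.2 ⟨by linarith [(hf a ha).1], by linarith [(hf a ha).2]⟩
  have hg_mid (b) (hb : b ∈ t) : |g b - (n + N) / 2| ≤ (N - n) / 2 :=
    abs_le.2 ⟨by linarith [(hg b hb).1], by linarith [(hg b hb).2]⟩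
  rw [← covariance_sub_const_left ((memLp_comp_of_forall_mem hAm hA f 1).integrable le_rfl)
      ((m + M) / 2),
    ← covariance_sub_const_right ((memLp_comp_of_forall_mem hBm hB g 1).integrable le_rfl)
      ((n + N) / 2),
    covariance_comp_eq_sum hAm hBm hA hB (fun a => f a - (m + M) / 2) fun b => g b - (n + N) / 2,
    mul_sum]
  refine (abs_sum_le_sum_abs _ _).trans (sum_le_sum fun c hc => ?_)
  have ⟨ha, hb⟩ := mem_product.1 hc
  have hmid : |(f c.1 - (m + M) / 2) * (g c.2 - (n + N) / 2)| ≤ (M - m) * (N - n) / 4 := by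
    rw [abs_mul]
    exact (mul_le_mul (hf_mid _ ha) (hg_mid _ hb) (abs_nonneg _)
      ((abs_nonneg _).trans (hf_mid _ ha))).trans_eq (by ring)
  rw [abs_mul, mul_comm]
  exact mul_le_mul_of_nonneg_right hmid (abs_nonneg _)

theorem abs_covariance_comp_le_sqrt_mutualInfo (hAm : AEMeasurable A μ) (hBm : AEMeasurable B μ)
    (hA : ∀ ω, A ω ∈ s) (hB : ∀ ω, B ω ∈ t) {f : α → ℝ} {g : β → ℝ} {m M n N : ℝ}
    (hf : ∀ a ∈ s, f a ∈ Set.Icc m M) (hg : ∀ b ∈ t, g b ∈ Set.Icc n N) :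
    |cov[fun ω => f (A ω), fun ω => g (B ω); μ]| ≤
      (M - m) * (N - n) * √(mutualInfo μ A B / 8) := by
  obtain ⟨ω₀⟩ : Nonempty Ω := μ.nonempty_of_neZero
  have hmM : 0 ≤ M - m := sub_nonneg.2 <| (hf _ (hA ω₀)).1.trans (hf _ (hA ω₀)).2
  have hnN : 0 ≤ N - n := sub_nonneg.2 <| (hg _ (hB ω₀)).1.trans (hg _ (hB ω₀)).2
  have hsqrt : √(2 * mutualInfo μ A B) = 4 * √(mutualInfo μ A B / 8) := by
    rw [show 2 * mutualInfo μ A B = 4 ^ 2 * (mutualInfo μ A B / 8) by ring,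
      Real.sqrt_mul (by norm_num), Real.sqrt_sq (by norm_num)]
  calc |cov[fun ω => f (A ω), fun ω => g (B ω); μ]|
      ≤ (M - m) * (N - n) / 4 * √(2 * mutualInfo μ A B) := by
        refine (abs_covariance_comp_le_mul_sum_abs hAm hBm hA hB hf hg).trans ?_
        gcongr
        exact sum_abs_massFun_sub_mul_le_sqrt_mutualInfo hAm hBm hA hB
    _ = (M - m) * (N - n) * √(mutualInfo μ A B / 8) := by rw [hsqrt]; ring

theorem abs_condExp_sub_exp_le_sqrt_mutualInfo_div_general (hAm : AEMeasurable A μ)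
    (hBm : AEMeasurable B μ) (hA : ∀ ω, A ω ∈ s) (hB : ∀ ω, B ω ∈ t) {f : α → ℝ} {m M : ℝ}
    (hf : ∀ a ∈ s, f a ∈ Set.Icc m M) {b : β} (hb : μ (B ⁻¹' {b}) ≠ 0) :
    |∫ ω, f (A ω) ∂μ[|B ⁻¹' {b}] - ∫ ω, f (A ω) ∂μ| ≤
      (M - m) * √(mutualInfo μ A B / 8) / μ.real (B ⁻¹' {b}) := by
  have hind (b') (_ : b' ∈ t) : ({b} : Set β).indicator (1 : β → ℝ) b' ∈ Set.Icc 0 1 :=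
    ⟨Set.indicator_nonneg (fun _ _ => zero_le_one) b',
      Set.indicator_le_self' (fun _ _ => zero_le_one) b'⟩
  have hcov := abs_covariance_comp_le_sqrt_mutualInfo hAm hBm hA hB hf hind
  rw [sub_zero, mul_one] at hcov
  rw [integral_cond_sub_integral_eq_covariance_div
    (hBm.nullMeasurable (measurableSet_singleton b)) hb (memLp_comp_of_forall_mem hAm hA f 2),
    abs_div, abs_of_nonneg measureReal_nonneg]
  exact div_le_div_of_nonneg_right hcov measureReal_nonneg

end MutualInfo

/-- Lemma A.1: for `{0,1}`-valued random variables `A, B` with `E[A] > 0` and `E[B] > 0`,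
`|E[A | B = 1] − E[A]| ≤ sqrt(I(A;B)/2) / E[B]`, where `E[A | B = 1]` is the expectation
of `A` under the conditional probability measure given the event `{B = 1}`. -/
theorem abs_condExp_sub_exp_le_sqrt_mutualInfo_div
    {Ω : Type*} [MeasurableSpace Ω] (μ : Measure Ω) [IsProbabilityMeasure μ]
    (A B : Ω → ℝ) (hA : ∀ ω, A ω = 0 ∨ A ω = 1) (hB : ∀ ω, B ω = 0 ∨ B ω = 1)
    (hEA : 0 < ∫ ω, A ω ∂μ) (hEB : 0 < ∫ ω, B ω ∂μ) :
    |(∫ ω, A ω ∂(ProbabilityTheory.cond μ (B ⁻¹' {1}))) - ∫ ω, A ω ∂μ| ≤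
      Real.sqrt (mutualInfo μ A B / 2) / ∫ ω, B ω ∂μ := by
  -- The Bochner integral of a non-integrable function is `0`, so `0 < E[A]` carries measurability.
  have hAm : AEMeasurable A μ := (Integrable.of_integral_ne_zero hEA.ne').aemeasurable
  have hBm : AEMeasurable B μ := (Integrable.of_integral_ne_zero hEB.ne').aemeasurable
  rw [integral_eq_measureReal_of_zero_or_one hBm hB] at hEB ⊢
  have hgeneral := abs_condExp_sub_exp_le_sqrt_mutualInfo_div_general (s := {0, 1}) (t := {0, 1})
    (f := id) (m := 0) (M := 1) hAm hBm (by simpa using hA) (by simpa using hB) (by simp)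
    ((measureReal_ne_zero_iff (measure_ne_top μ _)).1 hEB.ne')
  have hsqrt : √(mutualInfo μ A B / 8) ≤ √(mutualInfo μ A B / 2) := by
    rw [show mutualInfo μ A B / 8 = mutualInfo μ A B / 2 / 2 ^ 2 by ring,
      Real.sqrt_div' _ (by norm_num), Real.sqrt_sq zero_le_two]
    exact half_le_self (Real.sqrt_nonneg _)
  rw [sub_zero, one_mul] at hgeneral
  exact hgeneral.trans (div_le_div_of_nonneg_right hsqrt hEB.le)
end

section
/- (Lemma D.1, robustness of least squares classifiers) Let x_1,...,x_n ∈ R^d and y_1,...,y_n ∈ {1,...,k}, and let f : R^d → R^k be a linear map minimizing the least-squares loss Σ_{i∈[n]} Σ_{j∈[k]} (f(x_i)_j − 1[y_i=j])². Suppose that for at least a p fraction of the indices i, argmax_{j∈[k]} f(x_i)_j = y_i and the maximum over j of f(x_i)_j exceeds the second-largest value by at least γ > 0. Let ỹ be the η-noisy labels and let f̃ be a linear map minimizing the least-squares loss Σ_{i∈[n]} Σ_{j∈[k]} (f̃(x_i)_j − 1[ỹ_i=j])². Then, in expectation over the noise, argmax_{j∈[k]} f̃(x_i)_j = y_i for at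 least a p − 4η/γ² fraction of the indices i. -/
/-!
The scores of all `d → k` linear classifiers on the data form a subspace of `(ℝᵏ)ⁿ`, and a
least-squares fit is the point of this subspace nearest to the one-hot encoding `Y` of the labels
`y`. Nearest-point maps onto convex sets are nonexpansive, so passing from `y` to `ỹ` moves the
scores by a squared distance of at most `‖Ỹ - Y‖² = 2 · #{i | ỹ i ≠ y i}`.

An index that had margin `γ` and is no longer classified correctly has two scores whose changes
differ by at least `γ`, so it alone contributes `γ² / 2` to that squared distance. Hence every
changed label spoils at most `4 / γ²` indices, and on average at most `η n` labels change.
-/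

open MeasureTheory
open scoped ENNReal

instance (priority := 100) optionMeasurableSpace {α : Type*} : MeasurableSpace (Option α) := ⊤

/-- Distribution of a single noise coordinate: with probability `1 - η` the label is kept
(`none`), and with probability `η` it is replaced by a uniform label (`some b`, each with
probability `η/k`). -/
noncomputable def noiseMeasure (k : ℕ) (η : ℝ) : Measure (Option (Fin k)) :=
  ENNReal.ofReal (1 - η) • Measure.dirac none +
    ∑ b : Fin k, ENNReal.ofReal (η / k) • Measure.dirac (some b)

/-- The joint distribution of the `n` independent noise coordinates. -/
noncomputable def noisePi (n k : ℕ) (η : ℝ) : Measure (Fin n → Option (Fin k)) :=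
  Measure.pi fun _ => noiseMeasure k η

/-- The least-squares loss of a linear classifier `f` on the points `x` with labels `y`
(one-hot encoded). -/
noncomputable def lsLoss {d k n : ℕ} (x : Fin n → Fin d → ℝ) (y : Fin n → Fin k)
    (f : (Fin d → ℝ) →ₗ[ℝ] (Fin k → ℝ)) : ℝ :=
  ∑ i, ∑ j, (f (x i) j - if y i = j then 1 else 0) ^ 2

section NearestPoint

variable {E : Type*} [NormedAddCommGroup E] [InnerProductSpace ℝ E] {C : Set E} {a b u v : E}

lemma inner_sub_sub_nonpos_of_isMinOn_dist (hC : Convex ℝ C) (hu : u ∈ C)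
    (hmin : IsMinOn (dist a) C u) (hv : v ∈ C) : inner ℝ (a - u) (v - u) ≤ 0 := by
  have hinf : ‖a - u‖ = ⨅ w : C, ‖a - w‖ := by
    simpa only [dist_eq_norm] using (hmin.iInf_eq hu).symm
  exact (norm_eq_iInf_iff_real_inner_le_zero hC hu).1 hinf v hv

lemma dist_le_dist_of_isMinOn_dist (hC : Convex ℝ C) (hu : u ∈ C) (hau : IsMinOn (dist a) C u)
    (hv : v ∈ C) (hbv : IsMinOn (dist b) C v) : dist u v ≤ dist a b := by
  have hau' : inner ℝ (a - u) (v - u) ≤ 0 := inner_sub_sub_nonpos_of_isMinOn_dist hC hu hau hv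
  have hbv' : inner ℝ (b - v) (u - v) ≤ 0 := inner_sub_sub_nonpos_of_isMinOn_dist hC hv hbv hu
  have hsplit : inner ℝ (u - v) (u - v) =
      inner ℝ (a - b) (u - v) + inner ℝ (a - u) (v - u) + inner ℝ (b - v) (u - v) := by
    rw [← neg_sub u v, inner_neg_right, ← sub_eq_add_neg, ← inner_sub_left, ← inner_add_left]
    congr 1
    abel
  have hsq : ‖u - v‖ * ‖u - v‖ ≤ ‖a - b‖ * ‖u - v‖ :=
    calc ‖u - v‖ * ‖u - v‖ = inner ℝ (u - v) (u - v) := (real_inner_self_eq_norm_mul_norm _).symm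
      _ ≤ inner ℝ (a - b) (u - v) := by linarith
      _ ≤ ‖a - b‖ * ‖u - v‖ := real_inner_le_norm _ _
  rw [dist_eq_norm, dist_eq_norm]
  rcases (norm_nonneg (u - v)).eq_or_lt with h | h
  · exact h ▸ norm_nonneg _
  · exact le_of_mul_le_mul_right hsq h

end NearestPoint

section Scores

variable {ι κ : Type*}

/-- The scores given to each label in `κ` at each index in `ι`, with the Euclidean (Frobenius)
norm. -/
abbrev ScoreMatrix (ι κ : Type*) : Type _ := PiLp 2 fun _ : ι => EuclideanSpace ℝ κ

/-- The score vector `s` puts the label `c` ahead of every other label by at least `γ`. -/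
def HasMargin (γ : ℝ) (s : EuclideanSpace ℝ κ) (c : κ) : Prop :=
  ∀ j, j ≠ c → s j + γ ≤ s c

/-- The label `c` is the unique argmax of the score vector `s`. -/
def IsStrictArgmax (s : EuclideanSpace ℝ κ) (c : κ) : Prop :=
  ∀ j, j ≠ c → s j < s c

/-- The one-hot encoding of a vector of labels, as the score matrix that least squares aims at. -/
noncomputable def oneHot [DecidableEq κ] (y : ι → κ) : ScoreMatrix ι κ :=
  WithLp.toLp 2 fun i => EuclideanSpace.single (y i) 1

variable [Fintype κ]

lemma dist_single_one_sq [DecidableEq κ] {a b : κ} (hab : a ≠ b) :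
    dist (EuclideanSpace.single a (1 : ℝ)) (EuclideanSpace.single b 1) ^ 2 = 2 := by
  have horth : inner ℝ (EuclideanSpace.single a (1 : ℝ)) (EuclideanSpace.single b 1) = 0 :=
    EuclideanSpace.orthonormal_single.2 hab
  rw [dist_eq_norm, norm_sub_sq_real, horth, PiLp.norm_single, PiLp.norm_single]
  norm_num

lemma sq_apply_sub_apply_le (s : EuclideanSpace ℝ κ) (a b : κ) :
    (s a - s b) ^ 2 ≤ 2 * ‖s‖ ^ 2 := by
  classical
  rcases eq_or_ne a b with rfl | hab
  · rw [sub_self, zero_pow two_ne_zero]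
    positivity
  have hinner : inner ℝ (EuclideanSpace.single a (1 : ℝ) - EuclideanSpace.single b 1) s =
      s a - s b := by
    simp only [inner_sub_left, EuclideanSpace.inner_single_left, map_one, one_mul]
  rw [← hinner, ← dist_single_one_sq hab, dist_eq_norm, ← mul_pow]
  exact sq_le_sq.2 ((abs_real_inner_le_norm _ _).trans (le_abs_self _))

lemma HasMargin.sq_le_two_mul_dist_sq {γ : ℝ} {s t : EuclideanSpace ℝ κ} {c : κ} (hγ : 0 ≤ γ)
    (hs : HasMargin γ s c) (ht : ¬ IsStrictArgmax t c) : γ ^ 2 ≤ 2 * dist t s ^ 2 := by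
  simp only [IsStrictArgmax, not_forall, not_lt] at ht
  obtain ⟨j, hj, htj⟩ := ht
  have hgap : γ ≤ (t - s) j - (t - s) c := by
    rw [PiLp.sub_apply, PiLp.sub_apply]
    linarith [hs j hj]
  calc γ ^ 2 ≤ ((t - s) j - (t - s) c) ^ 2 := by gcongr
    _ ≤ 2 * dist t s ^ 2 := dist_eq_norm t s ▸ sq_apply_sub_apply_le (t - s) j c

variable [Fintype ι]

lemma dist_oneHot_sq [DecidableEq κ] (y z : ι → κ) :
    dist (oneHot y) (oneHot z) ^ 2 = 2 * Nat.card {i // y i ≠ z i} := by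
  have hrow (i : ι) : dist (oneHot y i) (oneHot z i) ^ 2 = if y i ≠ z i then 2 else 0 := by
    split_ifs with h
    · exact dist_single_one_sq h
    · simp only [oneHot, not_not.1 h, dist_self, zero_pow two_ne_zero]
  rw [PiLp.dist_sq_eq_of_L2, Finset.sum_congr rfl fun i _ => hrow i, ← Finset.sum_filter,
    Finset.sum_const, Nat.card_eq_fintype_card, Fintype.card_subtype, nsmul_eq_mul, mul_comm]

/-- Markov's inequality for the squared norms of the rows of `v - u`. -/
lemma card_hasMargin_le_add_dist_sq {γ : ℝ} (hγ : 0 < γ) (y : ι → κ) (u v : ScoreMatrix ι κ) :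
    (Nat.card {i // HasMargin γ (u i) (y i)} : ℝ) ≤
      Nat.card {i // IsStrictArgmax (v i) (y i)} + 2 / γ ^ 2 * dist v u ^ 2 := by
  classical
  set margin : Finset ι := {i | HasMargin γ (u i) (y i)}
  set correct : Finset ι := {i | IsStrictArgmax (v i) (y i)}
  have hlost : ((margin \ correct).card : ℝ) * γ ^ 2 ≤ 2 * dist v u ^ 2 :=
    calc ((margin \ correct).card : ℝ) * γ ^ 2
        = ∑ i ∈ margin \ correct, γ ^ 2 := by rw [Finset.sum_const, nsmul_eq_mul]
      _ ≤ ∑ i ∈ margin \ correct, 2 * dist (v i) (u i) ^ 2 := by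
        refine Finset.sum_le_sum fun i hi => ?_
        obtain ⟨him, hic⟩ := Finset.mem_sdiff.1 hi
        exact (Finset.mem_filter_univ i |>.1 him).sq_le_two_mul_dist_sq hγ.le
          fun h => hic (Finset.mem_filter_univ i |>.2 h)
      _ ≤ ∑ i, 2 * dist (v i) (u i) ^ 2 :=
        Finset.sum_le_univ_sum_of_nonneg fun i => by positivity
      _ = 2 * dist v u ^ 2 := by rw [PiLp.dist_sq_eq_of_L2, Finset.mul_sum]
  have hcard : (margin.card : ℝ) ≤ correct.card + (margin \ correct).card := by
    rw [add_comm]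
    exact_mod_cast Finset.card_le_card_sdiff_add_card (s := margin) (t := correct)
  simp only [Nat.card_eq_fintype_card, Fintype.card_subtype]
  rw [div_mul_eq_mul_div]
  exact hcard.trans (by gcongr; exact (le_div_iff₀ (by positivity)).2 hlost)

lemma card_hasMargin_le_of_isMinOn [DecidableEq κ] {C : Set (ScoreMatrix ι κ)} (hC : Convex ℝ C)
    {γ : ℝ} (hγ : 0 < γ) {y z : ι → κ} {u v : ScoreMatrix ι κ}
    (hu : u ∈ C) (hyu : IsMinOn (dist (oneHot y)) C u)
    (hv : v ∈ C) (hzv : IsMinOn (dist (oneHot z)) C v) :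
    (Nat.card {i // HasMargin γ (u i) (y i)} : ℝ) ≤
      Nat.card {i // IsStrictArgmax (v i) (y i)} + 4 / γ ^ 2 * Nat.card {i // z i ≠ y i} :=
  calc (Nat.card {i // HasMargin γ (u i) (y i)} : ℝ)
      ≤ Nat.card {i // IsStrictArgmax (v i) (y i)} + 2 / γ ^ 2 * dist v u ^ 2 :=
        card_hasMargin_le_add_dist_sq hγ y u v
    _ ≤ Nat.card {i // IsStrictArgmax (v i) (y i)} +
          2 / γ ^ 2 * dist (oneHot z) (oneHot y) ^ 2 := by
        gcongr
        exact dist_le_dist_of_isMinOn_dist hC hv hzv hu hyu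
    _ = Nat.card {i // IsStrictArgmax (v i) (y i)} + 4 / γ ^ 2 * Nat.card {i // z i ≠ y i} := by
        rw [dist_oneHot_sq]
        ring

end Scores

section Noise

instance {α : Type*} : DiscreteMeasurableSpace (Option α) := ⟨fun _ => trivial⟩

/-- The labels observed under the noise outcome `N`, where `none` keeps the clean label. -/
def noisyLabels {ι κ : Type*} (y : ι → κ) (N : ι → Option κ) : ι → κ :=
  fun i => (N i).getD (y i)

lemma card_noisyLabels_ne_le {ι κ : Type*} [Finite ι] (y : ι → κ) (N : ι → Option κ) :
    Nat.card {i // noisyLabels y N i ≠ y i} ≤ Nat.card {i // N i ≠ none} :=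
  Nat.card_mono (Set.toFinite {i | N i ≠ none}) fun i hi hN => hi (by simp [noisyLabels, hN])

variable {k : ℕ} {η : ℝ}

lemma isProbabilityMeasure_noiseMeasure [NeZero k] (hη0 : 0 ≤ η) (hη1 : η ≤ 1) :
    IsProbabilityMeasure (noiseMeasure k η) := by
  have hk : (k : ℝ) ≠ 0 := NeZero.ne _
  refine ⟨?_⟩
  simp only [noiseMeasure, Measure.add_apply, Measure.smul_apply, Measure.finsetSum_apply,
    measure_univ, smul_eq_mul, mul_one, Finset.sum_const, Finset.card_univ, Fintype.card_fin,
    nsmul_eq_mul]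
  rw [← ENNReal.ofReal_natCast, ← ENNReal.ofReal_mul (by positivity), mul_div_cancel₀ _ hk,
    ← ENNReal.ofReal_add (by linarith) hη0, sub_add_cancel, ENNReal.ofReal_one]

lemma noiseMeasure_real_compl_none [NeZero k] (hη0 : 0 ≤ η) (hη1 : η ≤ 1) :
    (noiseMeasure k η).real {none}ᶜ = η := by
  have := isProbabilityMeasure_noiseMeasure (k := k) hη0 hη1
  have hnone : noiseMeasure k η {none} = ENNReal.ofReal (1 - η) := by
    simp [noiseMeasure]
  rw [probReal_compl_eq_one_sub (MeasurableSet.of_discrete), measureReal_def, hnone,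
    ENNReal.toReal_ofReal (by linarith), sub_sub_cancel]

lemma isProbabilityMeasure_noisePi [NeZero k] (n : ℕ) (hη0 : 0 ≤ η) (hη1 : η ≤ 1) :
    IsProbabilityMeasure (noisePi n k η) := by
  have := isProbabilityMeasure_noiseMeasure (k := k) hη0 hη1
  unfold noisePi
  infer_instance

lemma noisePi_real_ne_none [NeZero k] {n : ℕ} (hη0 : 0 ≤ η) (hη1 : η ≤ 1) (i : Fin n) :
    (noisePi n k η).real {N | N i ≠ none} = η := by
  have := isProbabilityMeasure_noiseMeasure (k := k) hη0 hη1
  have heval : MeasurePreserving (Function.eval i) (noisePi n k η) (noiseMeasure k η) :=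
    measurePreserving_eval (fun _ => noiseMeasure k η) i
  exact (heval.measureReal_preimage MeasurableSet.of_discrete.nullMeasurableSet).trans
    (noiseMeasure_real_compl_none hη0 hη1)

lemma integral_card_ne_none_noisePi [NeZero k] (n : ℕ) (hη0 : 0 ≤ η) (hη1 : η ≤ 1) :
    ∫ N, (Nat.card {i : Fin n // N i ≠ none} : ℝ) ∂(noisePi n k η) = n * η := by
  have := isProbabilityMeasure_noisePi (k := k) n hη0 hη1
  have hcard (N : Fin n → Option (Fin k)) : (Nat.card {i : Fin n // N i ≠ none} : ℝ) =
      ∑ i, Set.indicator {N | N i ≠ none} 1 N := by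
    simp only [Nat.card_eq_fintype_card, Fintype.card_subtype, Set.indicator_apply,
      Set.mem_ofPred_eq, Pi.one_apply, Finset.sum_boole]
  simp only [hcard]
  rw [integral_finsetSum _ fun _ _ => Integrable.of_finite]
  simp only [integral_indicator_one MeasurableSet.of_discrete, noisePi_real_ne_none hη0 hη1,
    Finset.sum_const, Finset.card_univ, Fintype.card_fin, nsmul_eq_mul]

end Noise

section Linear

variable {d k n : ℕ}

/-- The scores of a linear classifier at the data points `x`, as a linear function of the
classifier. -/
noncomputable def linearScores (x : Fin n → Fin d → ℝ) :
    ((Fin d → ℝ) →ₗ[ℝ] (Fin k → ℝ)) →ₗ[ℝ] ScoreMatrix (Fin n) (Fin k) where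
  toFun f := WithLp.toLp 2 fun i => WithLp.toLp 2 (f (x i))
  map_add' _ _ := rfl
  map_smul' _ _ := rfl

lemma lsLoss_eq_dist_sq (x : Fin n → Fin d → ℝ) (y : Fin n → Fin k)
    (f : (Fin d → ℝ) →ₗ[ℝ] (Fin k → ℝ)) :
    lsLoss x y f = dist (oneHot y) (linearScores x f) ^ 2 := by
  rw [dist_comm]
  simp only [lsLoss, PiLp.dist_sq_eq_of_L2, Real.dist_eq, sq_abs, oneHot,
    PiLp.single_apply, eq_comm (a := y _)]
  rfl

lemma convex_range_linearScores (x : Fin n → Fin d → ℝ) :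
    Convex ℝ (Set.range (linearScores (k := k) x)) := by
  rw [← LinearMap.coe_range]
  exact Submodule.convex _

lemma isMinOn_range_linearScores {x : Fin n → Fin d → ℝ} {y : Fin n → Fin k}
    {f : (Fin d → ℝ) →ₗ[ℝ] (Fin k → ℝ)} (hf : ∀ g, lsLoss x y f ≤ lsLoss x y g) :
    IsMinOn (dist (oneHot y)) (Set.range (linearScores x)) (linearScores x f) := by
  rintro _ ⟨g, rfl⟩
  have hsq := hf g
  rw [lsLoss_eq_dist_sq, lsLoss_eq_dist_sq] at hsq
  exact (sq_le_sq₀ dist_nonneg dist_nonneg).1 hsq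

end Linear

/-- `C` stands for the score matrices that the model can attain on the data; for linear classifiers
it is a subspace. -/
theorem least_squares_robustness_general {k n : ℕ} [NeZero k] {η : ℝ} (hη0 : 0 ≤ η) (hη1 : η ≤ 1)
    {C : Set (ScoreMatrix (Fin n) (Fin k))} (hC : Convex ℝ C) (y : Fin n → Fin k)
    {γ : ℝ} (hγ : 0 < γ) {u : ScoreMatrix (Fin n) (Fin k)} (hu : u ∈ C)
    (hyu : IsMinOn (dist (oneHot y)) C u)
    {v : (Fin n → Option (Fin k)) → ScoreMatrix (Fin n) (Fin k)} (hv : ∀ N, v N ∈ C)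
    (hyv : ∀ N, IsMinOn (dist (oneHot (noisyLabels y N))) C (v N)) :
    (Nat.card {i // HasMargin γ (u i) (y i)} : ℝ) - 4 * η / γ ^ 2 * n ≤
      ∫ N, (Nat.card {i // IsStrictArgmax (v N i) (y i)} : ℝ) ∂(noisePi n k η) := by
  have := isProbabilityMeasure_noisePi (k := k) n hη0 hη1
  set m : ℝ := (Nat.card {i // HasMargin γ (u i) (y i)} : ℝ)
  have hpointwise (N : Fin n → Option (Fin k)) : m - 4 / γ ^ 2 * Nat.card {i // N i ≠ none} ≤
      Nat.card {i // IsStrictArgmax (v N i) (y i)} := by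
    rw [sub_le_iff_le_add]
    refine (card_hasMargin_le_of_isMinOn hC hγ hu hyu (hv N) (hyv N)).trans ?_
    gcongr
    exact card_noisyLabels_ne_le y N
  calc m - 4 * η / γ ^ 2 * n
      = ∫ N, (m - 4 / γ ^ 2 * Nat.card {i // N i ≠ none}) ∂(noisePi n k η) := by
        rw [integral_sub Integrable.of_finite Integrable.of_finite, integral_const,
          integral_const_mul, integral_card_ne_none_noisePi n hη0 hη1, probReal_univ, one_smul]
        ring
    _ ≤ ∫ N, (Nat.card {i // IsStrictArgmax (v N i) (y i)} : ℝ) ∂(noisePi n k η) :=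
        integral_mono Integrable.of_finite Integrable.of_finite hpointwise

/-- Lemma D.1 (robustness of least squares classifiers).  Let `f` be a linear map
minimizing the least-squares loss against the one-hot encoding of clean labels `y`, and
suppose that for at least a `p` fraction of the indices `i` the coordinate `y i` of
`f(x i)` exceeds every other coordinate by at least `γ > 0` (so the argmax is `y i` with
margin `γ`).  If `f̃ N` minimizes the least-squares loss against the `η`-noisy labels
`(N i).getD (y i)` for each noise outcome `N`, then the expected number of indices on
which the (unique) argmax of `f̃ N (x i)` equals `y i` is at least `(p − 4η/γ²)·n`. -/
theorem least_squares_robustness {d k n : ℕ} (hk : 2 ≤ k) (hn : 0 < n)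
    {η : ℝ} (hη0 : 0 < η) (hη1 : η < 1)
    (x : Fin n → Fin d → ℝ) (y : Fin n → Fin k) (p γ : ℝ) (hγ : 0 < γ)
    (f : (Fin d → ℝ) →ₗ[ℝ] (Fin k → ℝ))
    (hf : ∀ g : (Fin d → ℝ) →ₗ[ℝ] (Fin k → ℝ), lsLoss x y f ≤ lsLoss x y g)
    (hmargin : p * n ≤
      (Nat.card {i : Fin n // ∀ j, j ≠ y i → f (x i) j + γ ≤ f (x i) (y i)} : ℝ))
    (ftil : (Fin n → Option (Fin k)) → ((Fin d → ℝ) →ₗ[ℝ] (Fin k → ℝ)))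
    (hftil : ∀ (N : Fin n → Option (Fin k)) (g : (Fin d → ℝ) →ₗ[ℝ] (Fin k → ℝ)),
      lsLoss x (fun i => (N i).getD (y i)) (ftil N) ≤
        lsLoss x (fun i => (N i).getD (y i)) g) :
    (p - 4 * η / γ ^ 2) * n ≤
      ∫ N, (Nat.card {i : Fin n //
          ∀ j, j ≠ y i → ftil N (x i) j < ftil N (x i) (y i)} : ℝ)
        ∂(noisePi n k η) := by
  have : NeZero k := ⟨by lia⟩
  have hbound := least_squares_robustness_general hη0.le hη1.le (convex_range_linearScores x) y hγ
    ⟨f, rfl⟩ (isMinOn_range_linearScores hf) (v := fun N => linearScores x (ftil N))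
    (fun N => ⟨ftil N, rfl⟩) fun N => isMinOn_range_linearScores (hftil N)
  rw [sub_mul]
  exact (sub_le_sub_right hmargin _).trans hbound
end
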